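/- Let (T, Λ) be a cookie cutter system, let ψ : Λ → ℝ be Hölder continuous, let μ be a normalized Gibbs measure for ψ, let α ≥ 0 and let a, b > 0. If every T-invariant Borel probability measure ν on Λ satisfies ∫_Λ (ψ − αφ) dν ≠ 0, then the set of pairs (n, I), where n ≥ 1 and I is an n-th level basic set satisfying a·|I|^α ≤ μ(I) ≤ b·|I|^α, is finite. (Consequently the multifractal zeta function ζ_α^μ(s) = Σ_{n≥1} Σ_{i : a|I_n^i|^α ≤ μ(I_n^i) ≤ b|I_n^i|^α} |I_n^i|^s is a finite sum and hence entire.) -/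

import Mathlib

/-!
Suppose infinitely many pairs `(n, I)` satisfy `a|I|^α ≤ μ(I) ≤ b|I|^α`. There are only finitely
many basic sets of each level, so such pairs exist with `n` arbitrarily large.

A basic set of level `n ≥ 1` is a cylinder (`IsBasic.exists_eq_cyl`): an interval on which the
itinerary is constant and which `Tⁿ` maps onto `[0,1]`. By bounded distortion (`setLen_cyl`), `|I|`
is comparable to `exp (φⁿ(x))` for every `x ∈ I`, while the Gibbs property makes `μ(I)` comparable
to `exp (ψⁿ(x))` for `x ∈ I ∩ Λ`. The two-sided bound on `μ(I)` therefore yields a point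
`x ∈ I ∩ Λ` with `|(ψ - αφ)ⁿ(x)| ≤ M`, where `M` does not depend on `(n, I)`
(`exists_birkhoff_bound`).

The empirical measures of these orbit segments live on the compact set `Λ`, where `T` is continuous.
A weak limit of them is an invariant probability measure against which `ψ - αφ` has integral
`lim O(1)/n = 0` (`exists_invariantProb_integral_eq_zero`), contrary to the hypothesis.
-/

open MeasureTheory Set

/-- A cookie cutter system: `k ≥ 2` pairwise disjoint closed intervals
`[u j, v j] ⊆ [0,1]`, each mapped bijectively onto `[0,1]` by `T`, with
`T` differentiable with `ε`-Hölder derivative `T'` satisfying `|T'| ≥ lam > 1`. -/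
structure CookieCutter where
  k : ℕ
  two_le_k : 2 ≤ k
  u : Fin k → ℝ
  v : Fin k → ℝ
  T : ℝ → ℝ
  T' : ℝ → ℝ
  lam : ℝ
  eps : ℝ
  Ceps : ℝ
  nondeg : ∀ j, u j < v j
  subset_unit : ∀ j, Icc (u j) (v j) ⊆ Icc (0:ℝ) 1
  pair_disj : Pairwise fun i j => Disjoint (Icc (u i) (v i)) (Icc (u j) (v j))
  bijOn : ∀ j, BijOn T (Icc (u j) (v j)) (Icc (0:ℝ) 1)
  hasDeriv : ∀ x ∈ ⋃ j, Icc (u j) (v j),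
    HasDerivWithinAt T (T' x) (⋃ j, Icc (u j) (v j)) x
  eps_pos : 0 < eps
  Ceps_nonneg : 0 ≤ Ceps
  holder : ∀ x ∈ ⋃ j, Icc (u j) (v j), ∀ y ∈ ⋃ j, Icc (u j) (v j),
    |T' x - T' y| ≤ Ceps * |x - y| ^ eps
  one_lt_lam : 1 < lam
  expanding : ∀ x ∈ ⋃ j, Icc (u j) (v j), lam ≤ |T' x|

/-- The length of a (bounded) interval `I ⊆ ℝ`. -/
noncomputable def setLen (I : Set ℝ) : ℝ := sSup I - sInf I

namespace CookieCutter

variable (S : CookieCutter)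

/-- The domain `I_1 ∪ ⋯ ∪ I_k` of the cookie cutter map. -/
def domain : Set ℝ := ⋃ j, Icc (S.u j) (S.v j)

/-- The set `T^{-n}([0,1])`: points whose first `n` iterates stay in the domain. -/
def level (n : ℕ) : Set ℝ := {x | ∀ m < n, S.T^[m] x ∈ S.domain}

/-- `I` is an `n`-th level basic set, i.e. a connected component of `T^{-n}([0,1])`. -/
def IsBasic (n : ℕ) (I : Set ℝ) : Prop :=
  ∃ x ∈ S.level n, I = connectedComponentIn (S.level n) x

/-- The repeller `Λ = ⋂_{n ≥ 0} T^{-n}([0,1])`. -/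
def repeller : Set ℝ := {x | ∀ n, S.T^[n] x ∈ S.domain}

/-- The function `φ = - log |T'|`. -/
noncomputable def phi (x : ℝ) : ℝ := - Real.log |S.T' x|

/-- The Birkhoff sum `fⁿ(x) = Σ_{j<n} f(T^j x)`. -/
noncomputable def birkhoff (f : ℝ → ℝ) (n : ℕ) (x : ℝ) : ℝ :=
  ∑ j ∈ Finset.range n, f (S.T^[j] x)

/-- `f` is Hölder continuous on the set `A`. -/
def IsHolderOn (f : ℝ → ℝ) (A : Set ℝ) : Prop :=
  ∃ β C : ℝ, 0 < β ∧ β ≤ 1 ∧ 0 ≤ C ∧ ∀ x ∈ A, ∀ y ∈ A, |f x - f y| ≤ C * |x - y| ^ β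

/-- `μ` is a normalized Gibbs measure for the potential `ψ`: a Borel probability
measure on the repeller with `C ≤ μ(I_n^i)/e^{ψⁿ(x)} ≤ D` for every basic set. -/
def IsGibbs (ψ : ℝ → ℝ) (μ : Measure ℝ) : Prop :=
  IsProbabilityMeasure μ ∧ μ S.repellerᶜ = 0 ∧
    ∃ C D : ℝ, 0 < C ∧ 0 < D ∧
      ∀ n, 1 ≤ n → ∀ I, S.IsBasic n I → ∀ x ∈ I ∩ S.repeller,
        C * Real.exp (S.birkhoff ψ n x) ≤ (μ I).toReal ∧
          (μ I).toReal ≤ D * Real.exp (S.birkhoff ψ n x)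

/-- `ν` is a `T`-invariant Borel probability measure on the repeller. -/
def IsInvariantProb (ν : Measure ℝ) : Prop :=
  IsProbabilityMeasure ν ∧ ν S.repellerᶜ = 0 ∧
    ∀ A, MeasurableSet A → ν (S.T ⁻¹' A) = ν A

end CookieCutter

/-! ### Continuity from a Hölder modulus -/

lemma continuousOn_of_rpow_modulus {f : ℝ → ℝ} {A : Set ℝ} {β C : ℝ} (hβ : 0 < β)
    (h : ∀ x ∈ A, ∀ y ∈ A, |f x - f y| ≤ C * |x - y| ^ β) : ContinuousOn f A := by
  intro x hx
  rw [ContinuousWithinAt, tendsto_iff_dist_tendsto_zero]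
  have hg : Filter.Tendsto (fun y => C * |y - x| ^ β) (nhdsWithin x A) (nhds 0) := by
    have hc : Continuous fun y : ℝ => C * |y - x| ^ β :=
      continuous_const.mul ((continuous_id.sub continuous_const).abs.rpow_const
        fun _ => Or.inr hβ.le)
    have := hc.tendsto x
    simp only [sub_self, abs_zero, Real.zero_rpow hβ.ne', mul_zero] at this
    exact this.mono_left nhdsWithin_le_nhds
  refine squeeze_zero' (.of_forall fun _ => dist_nonneg) ?_ hg
  filter_upwards [self_mem_nhdsWithin] with y hy
  exact h y hy x hx

namespace CookieCutter

variable (S : CookieCutter)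

/-! ### Basic sets as cylinders -/

/-- The `j`-th interval `I_j` of the cookie cutter. -/
abbrev piece (j : Fin S.k) : Set ℝ := Icc (S.u j) (S.v j)

/-- The cylinder of length `n` of the word `w`: the points of `[0,1]` whose `m`-th iterate lies in
the interval of index `w m` for each `m < n`. Only the first `n` letters of `w` matter. -/
def cyl (n : ℕ) (w : ℕ → Fin S.k) : Set ℝ :=
  {y | y ∈ Icc (0:ℝ) 1 ∧ ∀ m < n, S.T^[m] y ∈ S.piece (w m)}

lemma piece_subset_domain (j : Fin S.k) : S.piece j ⊆ S.domain :=
  subset_iUnion (fun j => Icc (S.u j) (S.v j)) j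

lemma mem_cyl_succ {n : ℕ} {w : ℕ → Fin S.k} {y : ℝ} :
    y ∈ S.cyl (n + 1) w ↔ y ∈ S.piece (w 0) ∧ S.T y ∈ S.cyl n (fun m => w (m + 1)) := by
  constructor
  · rintro ⟨-, h⟩
    have h0 : y ∈ S.piece (w 0) := h 0 (Nat.succ_pos n)
    refine ⟨h0, (S.bijOn _).mapsTo h0, fun m hm => ?_⟩
    have := h (m + 1) (by omega)
    rwa [Function.iterate_succ_apply] at this
  · rintro ⟨h0, -, h⟩
    refine ⟨S.subset_unit _ h0, fun m hm => ?_⟩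
    cases m with
    | zero => exact h0
    | succ m =>
      rw [Function.iterate_succ_apply]
      exact h m (by omega)

lemma continuousOn_T : ContinuousOn S.T S.domain :=
  fun x hx => (S.hasDeriv x hx).continuousWithinAt

lemma continuousOn_T_piece (j : Fin S.k) : ContinuousOn S.T (S.piece j) :=
  S.continuousOn_T.mono (S.piece_subset_domain j)

lemma isClosed_domain : IsClosed S.domain :=
  isClosed_iUnion_of_finite fun _ => isClosed_Icc

lemma ordConnected_cyl (n : ℕ) : ∀ w : ℕ → Fin S.k, (S.cyl n w).OrdConnected := by
  induction n with
  | zero =>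
    intro w
    have : S.cyl 0 w = Icc (0:ℝ) 1 := by ext y; simp [cyl]
    rw [this]; exact ordConnected_Icc
  | succ n ih =>
    intro w
    have hoc := ih (fun m => w (m + 1))
    -- `T` is monotone or antitone on the first interval, so it pulls back intervals to intervals.
    have hmono := (S.continuousOn_T_piece (w 0)).strictMonoOn_of_injOn_Icc'
      (S.nondeg (w 0)).le (S.bijOn (w 0)).injOn
    refine ⟨fun p hp q hq r hr => ?_⟩
    rw [mem_cyl_succ] at hp hq ⊢
    have hr0 : r ∈ S.piece (w 0) := ⟨hp.1.1.trans hr.1, hr.2.trans hq.1.2⟩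
    refine ⟨hr0, ?_⟩
    rcases hmono with h | h
    · exact hoc.out hp.2 hq.2 ⟨h.monotoneOn hp.1 hr0 hr.1, h.monotoneOn hr0 hq.1 hr.2⟩
    · exact hoc.out hq.2 hp.2 ⟨h.antitoneOn hr0 hq.1 hr.2, h.antitoneOn hp.1 hr0 hr.1⟩

lemma surjOn_cyl (n : ℕ) : ∀ w : ℕ → Fin S.k, SurjOn S.T^[n] (S.cyl n w) (Icc (0:ℝ) 1) := by
  induction n with
  | zero => intro w y hy; exact ⟨y, ⟨hy, by simp⟩, rfl⟩
  | succ n ih =>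
    intro w y hy
    obtain ⟨z, hz, rfl⟩ := ih (fun m => w (m + 1)) hy
    obtain ⟨x, hx, rfl⟩ := (S.bijOn (w 0)).surjOn hz.1
    exact ⟨x, S.mem_cyl_succ.2 ⟨hx, hz⟩, rfl⟩

lemma mapsTo_cyl (n : ℕ) : ∀ w : ℕ → Fin S.k, MapsTo S.T^[n] (S.cyl n w) (Icc (0:ℝ) 1) := by
  induction n with
  | zero => intro w y hy; exact hy.1
  | succ n ih =>
    intro w y hy
    rw [Function.iterate_succ_apply]
    exact ih _ (S.mem_cyl_succ.1 hy).2

lemma cyl_subset_level (n : ℕ) (w : ℕ → Fin S.k) : S.cyl n w ⊆ S.level n :=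
  fun _ hy m hm => S.piece_subset_domain _ (hy.2 m hm)

lemma isPreconnected_subset_piece {C : Set ℝ} (hC : IsPreconnected C) (hCd : C ⊆ S.domain)
    {j : Fin S.k} {x : ℝ} (hx : x ∈ C) (hxj : x ∈ S.piece j) : C ⊆ S.piece j := by
  intro y hy
  by_contra hyj
  have hcl : IsClosed (⋃ i : {i // i ≠ j}, S.piece i) :=
    isClosed_iUnion_of_finite fun _ => isClosed_Icc
  obtain ⟨i, hi⟩ := mem_iUnion.1 (hCd hy)
  have hij : i ≠ j := by rintro rfl; exact hyj hi
  obtain ⟨z, -, hzj, hz⟩ := isPreconnected_closed_iff.1 hC (S.piece j) _ isClosed_Icc hcl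
    (fun z hz => by
      obtain ⟨l, hl⟩ := mem_iUnion.1 (hCd hz)
      by_cases h : l = j
      · left; rw [← h]; exact hl
      · right; exact mem_iUnion.2 ⟨⟨l, h⟩, hl⟩)
    ⟨x, hx, hxj⟩ ⟨y, hy, mem_iUnion.2 ⟨⟨i, hij⟩, hi⟩⟩
  obtain ⟨⟨l, hl⟩, hzl⟩ := mem_iUnion.1 hz
  exact disjoint_left.1 (S.pair_disj hl) hzl hzj

lemma isPreconnected_subset_cyl (n : ℕ) : ∀ (w : ℕ → Fin S.k) (C : Set ℝ) (x : ℝ),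
    IsPreconnected C → C ⊆ Icc 0 1 → C ⊆ S.level n → x ∈ C → x ∈ S.cyl n w → C ⊆ S.cyl n w := by
  induction n with
  | zero => intro w C x _ h01 _ _ _ y hy; exact ⟨h01 hy, by simp⟩
  | succ n ih =>
    intro w C x hC _ hl hxC hx
    rw [mem_cyl_succ] at hx
    have hCd : C ⊆ S.domain := fun y hy => hl hy 0 (Nat.succ_pos n)
    have hCp := S.isPreconnected_subset_piece hC hCd hxC hx.1
    have := ih (fun m => w (m + 1)) (S.T '' C) (S.T x)
      (hC.image _ (S.continuousOn_T.mono hCd))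
      (by rintro _ ⟨y, hy, rfl⟩; exact (S.bijOn _).mapsTo (hCp hy))
      (by
        rintro _ ⟨y, hy, rfl⟩ m hm
        have := hl hy (m + 1) (by omega)
        rwa [Function.iterate_succ_apply] at this)
      (mem_image_of_mem _ hxC) hx.2
    intro y hy
    exact S.mem_cyl_succ.2 ⟨hCp hy, this (mem_image_of_mem _ hy)⟩

lemma exists_word {n : ℕ} (hn : 1 ≤ n) {x : ℝ} (hx : x ∈ S.level n) :
    ∃ w : ℕ → Fin S.k, x ∈ S.cyl n w := by
  have : ∀ m, ∃ j : Fin S.k, m < n → S.T^[m] x ∈ S.piece j := by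
    intro m
    by_cases hm : m < n
    · obtain ⟨j, hj⟩ := mem_iUnion.1 (hx m hm)
      exact ⟨j, fun _ => hj⟩
    · exact ⟨⟨0, by have := S.two_le_k; omega⟩, fun h => absurd h hm⟩
  choose w hw using this
  exact ⟨w, S.subset_unit _ (hw 0 (by omega)), fun m hm => hw m hm⟩

/-- Basic sets of level `n ≥ 1` are cylinders. -/
lemma IsBasic.exists_eq_cyl {S : CookieCutter} {n : ℕ} (hn : 1 ≤ n) {I : Set ℝ}
    (hI : S.IsBasic n I) : ∃ w : ℕ → Fin S.k, I = S.cyl n w := by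
  obtain ⟨x, hx, rfl⟩ := hI
  obtain ⟨w, hw⟩ := S.exists_word hn hx
  refine ⟨w, Subset.antisymm ?_ ?_⟩
  · refine S.isPreconnected_subset_cyl n w _ x isPreconnected_connectedComponentIn ?_
      (connectedComponentIn_subset _ _) (mem_connectedComponentIn hx) hw
    intro y hy
    obtain ⟨j, hj⟩ := mem_iUnion.1 (connectedComponentIn_subset _ _ hy 0 hn)
    exact S.subset_unit j hj
  · exact (isPreconnected_iff_ordConnected.2 (S.ordConnected_cyl n w)).subset_connectedComponentIn
      hw (S.cyl_subset_level n w)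

lemma finite_basic {n : ℕ} (hn : 1 ≤ n) : {I | S.IsBasic n I}.Finite := by
  have j0 : Fin S.k := ⟨0, by have := S.two_le_k; omega⟩
  refine (finite_range fun w : Fin n → Fin S.k =>
    S.cyl n (fun m => if h : m < n then w ⟨m, h⟩ else j0)).subset ?_
  intro I hI
  obtain ⟨w, rfl⟩ := IsBasic.exists_eq_cyl hn hI
  refine ⟨fun m => w m, ?_⟩
  ext y
  simp only [cyl, mem_ofPred_eq]
  refine and_congr_right fun _ => forall₂_congr fun m hm => ?_
  simp [hm]

/-! ### Bounded distortion -/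

lemma exists_mvt {j : Fin S.k} {p q : ℝ} (hp : p ∈ S.piece j) (hq : q ∈ S.piece j) :
    ∃ ξ ∈ uIcc p q, ξ ∈ S.piece j ∧ |S.T p - S.T q| = |S.T' ξ| * |p - q| := by
  wlog hpq : p ≤ q generalizing p q
  · obtain ⟨ξ, h1, h2, h3⟩ := this hq hp (le_of_not_ge hpq)
    exact ⟨ξ, uIcc_comm q p ▸ h1, h2, by rw [abs_sub_comm, h3, abs_sub_comm q p]⟩
  rcases hpq.eq_or_lt with rfl | hlt
  · exact ⟨p, left_mem_uIcc, hp, by simp⟩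
  have hsub : Icc p q ⊆ S.piece j := Icc_subset_Icc hp.1 hq.2
  obtain ⟨ξ, hξ, h⟩ := exists_hasDerivAt_eq_slope S.T S.T' hlt
    ((S.continuousOn_T_piece j).mono hsub) (fun x hx => by
      refine (S.hasDeriv x (S.piece_subset_domain j (hsub (Ioo_subset_Icc_self hx)))).hasDerivAt ?_
      exact Filter.mem_of_superset (Icc_mem_nhds hx.1 hx.2)
        (hsub.trans (S.piece_subset_domain j)))
  have hξ' := Ioo_subset_Icc_self hξ
  refine ⟨ξ, Icc_subset_uIcc hξ', hsub hξ', ?_⟩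
  have hne : q - p ≠ 0 := by linarith
  rw [h, ← abs_mul, abs_sub_comm]
  rw [← abs_neg ((S.T q - S.T p) / (q - p) * (p - q))]
  congr 1
  field_simp
  ring

lemma phi_sub_le {x y : ℝ} (hx : x ∈ S.domain) (hy : y ∈ S.domain) :
    |S.phi x - S.phi y| ≤ S.Ceps * |x - y| ^ S.eps := by
  have key : ∀ s t : ℝ, 1 ≤ s → 1 ≤ t → Real.log s - Real.log t ≤ |s - t| := by
    intro s t hs ht
    rw [← Real.log_div (by linarith) (by linarith)]
    refine (Real.log_le_sub_one_of_pos (by positivity)).trans ?_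
    have : s / t - 1 = (s - t) / t := by field_simp
    rw [this]
    exact (div_le_div_of_nonneg_right (le_abs_self _) (by linarith)).trans
      (div_le_self (abs_nonneg _) ht)
  have h1 := S.one_lt_lam
  have hx1 : 1 ≤ |S.T' x| := h1.le.trans (S.expanding x hx)
  have hy1 : 1 ≤ |S.T' y| := h1.le.trans (S.expanding y hy)
  refine le_trans ?_ (S.holder x hx y hy)
  refine le_trans ?_ (abs_abs_sub_abs_le (S.T' x) (S.T' y))
  unfold phi
  have k1 := key _ _ hx1 hy1
  have k2 := key _ _ hy1 hx1
  rw [abs_sub_comm |S.T' y|] at k2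
  rw [abs_le]; constructor <;> linarith

lemma dist_cyl_le (n : ℕ) : ∀ (w : ℕ → Fin S.k) (p q : ℝ), p ∈ S.cyl n w → q ∈ S.cyl n w →
    |p - q| ≤ (S.lam⁻¹) ^ n := by
  have h1 := S.one_lt_lam
  induction n with
  | zero =>
    intro w p q hp hq
    rw [pow_zero, abs_le]
    constructor <;> linarith [hp.1.1, hp.1.2, hq.1.1, hq.1.2]
  | succ n ih =>
    intro w p q hp hq
    rw [mem_cyl_succ] at hp hq
    obtain ⟨ξ, -, hξ, h⟩ := S.exists_mvt hp.1 hq.1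
    have := ih _ _ _ hp.2 hq.2
    have he : S.lam * |p - q| ≤ |S.T p - S.T q| := by
      rw [h]; gcongr; exact S.expanding ξ (S.piece_subset_domain _ hξ)
    rw [pow_succ', inv_mul_eq_div, le_div_iff₀ (by linarith)]
    linarith

/-- A bound for the logarithmic distortion accumulated over `n` steps on a cylinder of length `n`. -/
noncomputable def distort (n : ℕ) : ℝ :=
  ∑ m ∈ Finset.range n, S.Ceps * ((S.lam⁻¹) ^ S.eps) ^ (m + 1)

lemma distort_le : ∃ K, ∀ n, S.distort n ≤ K := by
  have h1 := S.one_lt_lam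
  have h0 : 0 ≤ S.lam⁻¹ := inv_nonneg.2 (by linarith)
  have hr0 : 0 ≤ (S.lam⁻¹) ^ S.eps := Real.rpow_nonneg h0 _
  have hr1 : (S.lam⁻¹) ^ S.eps < 1 := Real.rpow_lt_one h0 (inv_lt_one_of_one_lt₀ h1) S.eps_pos
  have hs : Summable fun m : ℕ => S.Ceps * ((S.lam⁻¹) ^ S.eps) ^ (m + 1) :=
    ((summable_nat_add_iff 1).2 (summable_geometric_of_lt_one hr0 hr1)).mul_left _
  exact ⟨_, fun n => hs.sum_le_tsum _ fun m _ => mul_nonneg S.Ceps_nonneg (pow_nonneg hr0 _)⟩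

lemma birkhoff_succ (f : ℝ → ℝ) (n : ℕ) (x : ℝ) :
    S.birkhoff f (n + 1) x = f x + S.birkhoff f n (S.T x) := by
  simp [birkhoff, Finset.sum_range_succ', add_comm]

/-- Bounded distortion: on a cylinder of length `n`, `Tⁿ` expands distances by the factor
`exp (-φⁿ(x))` up to `exp (± distort n)`, whichever point `x` of the cylinder is used. The two
points and `x` are within `lam ^ (-(n - m))` of each other after `m` steps, so the errors made by
replacing the mean value points by the orbit of `x` form a geometric series. -/
lemma distortion (n : ℕ) : ∀ (w : ℕ → Fin S.k) (p q x : ℝ), p ∈ S.cyl n w → q ∈ S.cyl n w →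
    x ∈ S.cyl n w →
    |p - q| ≤ |S.T^[n] p - S.T^[n] q| * Real.exp (S.birkhoff S.phi n x + S.distort n) ∧
    |S.T^[n] p - S.T^[n] q| * Real.exp (S.birkhoff S.phi n x - S.distort n) ≤ |p - q| := by
  induction n with
  | zero => intro w p q x _ _ _; simp [birkhoff, distort]
  | succ n ih =>
    intro w p q x hp hq hx
    have h1 := S.one_lt_lam
    have hpx := S.dist_cyl_le _ w p x hp hx
    have hqx := S.dist_cyl_le _ w q x hq hx
    rw [mem_cyl_succ] at hp hq hx
    obtain ⟨ih1, ih2⟩ := ih _ _ _ _ hp.2 hq.2 hx.2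
    obtain ⟨ξ, hξ, hξp, h⟩ := S.exists_mvt hp.1 hq.1
    have hξd := S.piece_subset_domain _ hξp
    have hxd := S.piece_subset_domain _ hx.1
    have hξx : |ξ - x| ≤ (S.lam⁻¹) ^ (n + 1) := by
      rw [abs_le] at hpx hqx ⊢
      rcases mem_uIcc.1 hξ with h | h <;> constructor <;> linarith
    have hphi : |S.phi ξ - S.phi x| ≤ S.Ceps * ((S.lam⁻¹) ^ S.eps) ^ (n + 1) := by
      refine (S.phi_sub_le hξd hxd).trans ?_
      have h0 : 0 ≤ S.lam⁻¹ := inv_nonneg.2 (by linarith)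
      have : ((S.lam⁻¹) ^ S.eps) ^ (n + 1) = ((S.lam⁻¹) ^ (n + 1)) ^ S.eps := by
        rw [← Real.rpow_natCast, ← Real.rpow_natCast, ← Real.rpow_mul h0, ← Real.rpow_mul h0,
          mul_comm]
      rw [this]
      exact mul_le_mul_of_nonneg_left
        (Real.rpow_le_rpow (abs_nonneg _) hξx S.eps_pos.le) S.Ceps_nonneg
    have hpos : 0 < |S.T' ξ| := by linarith [S.expanding ξ hξd]
    have hpq : |p - q| = |S.T p - S.T q| * Real.exp (S.phi ξ) := by
      rw [h, phi, Real.exp_neg, Real.exp_log hpos]; field_simp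
    have hd : S.distort (n + 1) = S.distort n + S.Ceps * ((S.lam⁻¹) ^ S.eps) ^ (n + 1) := by
      rw [distort, Finset.sum_range_succ, ← distort]
    rw [abs_le] at hphi
    rw [Function.iterate_succ_apply, Function.iterate_succ_apply, birkhoff_succ, hpq, hd]
    constructor
    · refine (mul_le_mul_of_nonneg_right ih1 (Real.exp_nonneg _)).trans ?_
      rw [mul_assoc, ← Real.exp_add]
      exact mul_le_mul_of_nonneg_left (Real.exp_le_exp.2 (by linarith)) (abs_nonneg _)
    · refine le_trans ?_ (mul_le_mul_of_nonneg_right ih2 (Real.exp_nonneg _))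
      rw [mul_assoc, ← Real.exp_add]
      exact mul_le_mul_of_nonneg_left (Real.exp_le_exp.2 (by linarith)) (abs_nonneg _)

/-- The length of a cylinder is comparable to `exp (φⁿ(x))` for each of its points `x`. -/
lemma setLen_cyl {n : ℕ} {w : ℕ → Fin S.k} {x : ℝ} (hx : x ∈ S.cyl n w) :
    setLen (S.cyl n w) ≤ Real.exp (S.birkhoff S.phi n x + S.distort n) ∧
    Real.exp (S.birkhoff S.phi n x - S.distort n) ≤ setLen (S.cyl n w) := by
  have hba : BddAbove (S.cyl n w) := ⟨1, fun y hy => hy.1.2⟩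
  have hbb : BddBelow (S.cyl n w) := ⟨0, fun y hy => hy.1.1⟩
  constructor
  · rw [setLen, sub_le_iff_le_add]
    refine csSup_le ⟨x, hx⟩ fun p hp => ?_
    rw [← sub_le_iff_le_add']
    refine le_csInf ⟨x, hx⟩ fun q hq => ?_
    have h := (S.distortion n w p q x hp hq hx).1
    have hT : |S.T^[n] p - S.T^[n] q| ≤ 1 := by
      have h1 := S.mapsTo_cyl n w hp
      have h2 := S.mapsTo_cyl n w hq
      rw [abs_le]; constructor <;> linarith [h1.1, h1.2, h2.1, h2.2]
    have := mul_le_mul_of_nonneg_right hT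
      (Real.exp_nonneg (S.birkhoff S.phi n x + S.distort n))
    linarith [le_abs_self (p - q)]
  · obtain ⟨p, hp, hp0⟩ := S.surjOn_cyl n w (left_mem_Icc.2 zero_le_one)
    obtain ⟨q, hq, hq1⟩ := S.surjOn_cyl n w (right_mem_Icc.2 zero_le_one)
    have h := (S.distortion n w p q x hp hq hx).2
    rw [hp0, hq1] at h
    norm_num at h
    refine h.trans ?_
    have h1 := le_csSup hba hp
    have h2 := le_csSup hba hq
    have h3 := csInf_le hbb hp
    have h4 := csInf_le hbb hq
    rw [setLen, abs_le]; constructor <;> linarith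

/-! ### The repeller -/

lemma repeller_subset_domain : S.repeller ⊆ S.domain := fun _ hx => hx 0

lemma mapsTo_repeller : MapsTo S.T S.repeller S.repeller := fun x hx n => by
  have := hx (n + 1)
  rwa [Function.iterate_succ_apply] at this

lemma isClosed_level (n : ℕ) : IsClosed (S.level n) := by
  induction n with
  | zero => simp [level]
  | succ n ih =>
    have : S.level (n + 1) = S.domain ∩ S.T ⁻¹' S.level n := by
      ext x
      constructor
      · intro h
        refine ⟨h 0 (Nat.succ_pos n), fun m hm => ?_⟩
        have := h (m + 1) (by omega)
        rwa [Function.iterate_succ_apply] at this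
      · rintro ⟨h0, h⟩ m hm
        cases m with
        | zero => exact h0
        | succ m => rw [Function.iterate_succ_apply]; exact h m (by omega)
    rw [this]
    exact S.continuousOn_T.preimage_isClosed_of_isClosed S.isClosed_domain ih

lemma isCompact_repeller : IsCompact S.repeller := by
  refine isCompact_Icc.of_isClosed_subset (s := Icc (0:ℝ) 1) ?_ ?_
  · have : S.repeller = ⋂ n, S.level n := by
      ext x
      simp only [repeller, level, mem_iInter, mem_ofPred_eq]
      exact ⟨fun h n m _ => h m, fun h n => h (n + 1) n (Nat.lt_succ_self n)⟩
    rw [this]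
    exact isClosed_iInter S.isClosed_level
  · intro x hx
    obtain ⟨j, hj⟩ := mem_iUnion.1 (S.repeller_subset_domain hx)
    exact S.subset_unit j hj

lemma cyl_inter_repeller_nonempty (hne : S.repeller.Nonempty) (n : ℕ) (w : ℕ → Fin S.k) :
    (S.cyl n w ∩ S.repeller).Nonempty := by
  obtain ⟨z, hz⟩ := hne
  obtain ⟨j, hj⟩ := mem_iUnion.1 (S.repeller_subset_domain hz)
  obtain ⟨x, hx, rfl⟩ := S.surjOn_cyl n w (S.subset_unit j hj)
  refine ⟨x, hx, fun m => ?_⟩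
  rcases lt_or_ge m n with h | h
  · exact S.cyl_subset_level n w hx m h
  · have := hz (m - n)
    rwa [← Function.iterate_add_apply, Nat.sub_add_cancel h] at this

end CookieCutter

/-! ### Invariant limits of empirical measures -/

section Empirical

open Filter Topology

variable {X : Type*} [MeasurableSpace X]

/-- The empirical measure `(1/n) ∑_{j<n} δ_{τ^j x}` of an orbit segment. -/
noncomputable def empirical (τ : X → X) (n : ℕ) (x : X) : Measure X :=
  (n : ENNReal)⁻¹ • ∑ j ∈ Finset.range n, Measure.dirac (τ^[j] x)

lemma isProbabilityMeasure_empirical (τ : X → X) {n : ℕ} (hn : n ≠ 0) (x : X) :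
    IsProbabilityMeasure (empirical τ n x) := by
  constructor
  simp only [empirical, Measure.smul_apply, Measure.finsetSum_apply, measure_univ,
    Finset.sum_const, Finset.card_range, smul_eq_mul, nsmul_eq_mul, mul_one]
  exact ENNReal.inv_mul_cancel (by exact_mod_cast hn) (ENNReal.natCast_ne_top n)

lemma integral_empirical [TopologicalSpace X] [BorelSpace X] (τ : X → X) (n : ℕ) (x : X)
    {f : X → ℝ} (hf : Continuous f) :
    ∫ y, f y ∂(empirical τ n x) = (n : ℝ)⁻¹ * birkhoffSum τ f n x := by
  have hd : ∀ y : X, Integrable f (Measure.dirac y) := fun y =>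
    (integrable_dirac' hf.measurable.stronglyMeasurable (by simp))
  rw [empirical, integral_smul_measure, integral_finsetSum_measure (fun j _ => hd _)]
  simp [birkhoffSum, integral_dirac' _ _ hf.measurable.stronglyMeasurable]

/-- If a continuous function has uniformly bounded Birkhoff sums along arbitrarily long orbit
segments, then it has integral zero for some invariant probability measure: a weak limit of the
empirical measures of these segments. -/
lemma exists_invariant_integral_eq_zero [TopologicalSpace X]
    [BorelSpace X] [CompactSpace X] [T2Space X] [HasOuterApproxClosed X]
    {τ : X → X} (hτ : Continuous τ) {f : X → ℝ} (hf : Continuous f) {M : ℝ}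
    (h : ∀ N : ℕ, ∃ n, N ≤ n ∧ ∃ x, |birkhoffSum τ f n x| ≤ M) :
    ∃ ν : ProbabilityMeasure X, (ν : Measure X).map τ = ν ∧ ∫ y, f y ∂(ν : Measure X) = 0 := by
  choose n hn x hx using fun N : ℕ => h (N + 1)
  have hn0 : ∀ N, n N ≠ 0 := fun N => by have := hn N; omega
  have hninf : Tendsto n atTop atTop :=
    tendsto_atTop_mono (fun N => (Nat.le_succ N).trans (hn N)) tendsto_id
  let P : ℕ → ProbabilityMeasure X := fun N =>
    ⟨empirical τ (n N) (x N), isProbabilityMeasure_empirical τ (hn0 N) (x N)⟩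
  let U : Ultrafilter ℕ := Ultrafilter.of atTop
  have hU : (U : Filter ℕ) ≤ atTop := Ultrafilter.of_le atTop
  obtain ⟨ν, -, hν⟩ := isCompact_univ.ultrafilter_le_nhds (U.map P) (by simp)
  have hlim : ∀ g : X → ℝ, Continuous g →
      Tendsto (fun N => (n N : ℝ)⁻¹ * birkhoffSum τ g (n N) (x N)) U
        (𝓝 (∫ y, g y ∂(ν : Measure X))) := by
    intro g hg
    have := (ProbabilityMeasure.continuous_integral_continuousMap
      (⟨g, hg⟩ : C(X, ℝ))).tendsto ν |>.comp hν
    refine this.congr fun N => ?_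
    exact integral_empirical τ (n N) (x N) hg
  have hinv0 : Tendsto (fun N => (n N : ℝ)⁻¹) U (𝓝 0) :=
    (tendsto_inv_atTop_zero.comp (tendsto_natCast_atTop_atTop.comp hninf)).mono_left hU
  have hzero : ∀ (c : ℕ → ℝ) (B : ℝ), (∀ N, |c N| ≤ B) →
      Tendsto (fun N => (n N : ℝ)⁻¹ * c N) U (𝓝 0) := fun c B hc =>
    hinv0.zero_mul_isBoundedUnder_le
      (isBoundedUnder_of ⟨B, fun N => by simpa using hc N⟩)
  refine ⟨ν, ?_, tendsto_nhds_unique (hlim f hf) (hzero _ M hx)⟩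
  have : IsProbabilityMeasure ((ν : Measure X).map τ) :=
    Measure.isProbabilityMeasure_map hτ.measurable.aemeasurable
  refine ext_of_forall_integral_eq_of_IsFiniteMeasure fun g => ?_
  rw [integral_map hτ.measurable.aemeasurable g.continuous.measurable.aestronglyMeasurable]
  -- The Birkhoff sums of `g ∘ τ - g` telescope to `g (τⁿ x) - g x`.
  have h1 := hlim (fun y => g (τ y)) (g.continuous.comp hτ)
  have h2 := hlim g g.continuous
  have h3 := hzero (fun N => g (τ^[n N] (x N)) - g (x N)) (‖g‖ + ‖g‖) fun N =>
    (norm_sub_le _ _).trans (add_le_add (g.norm_coe_le_norm _) (g.norm_coe_le_norm _))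
  have htel : ∀ N, g (τ^[n N] (x N)) - g (x N) =
      birkhoffSum τ (fun y => g (τ y)) (n N) (x N) - birkhoffSum τ g (n N) (x N) := by
    intro N
    rw [← birkhoffSum_apply_sub_birkhoffSum τ g (n N) (x N)]
    simp only [birkhoffSum, ← Function.iterate_succ_apply, ← Function.iterate_succ_apply']
  simp only [htel, mul_sub] at h3
  exact sub_eq_zero.1 (tendsto_nhds_unique (h1.sub h2) h3)

end Empirical

namespace CookieCutter

variable (S : CookieCutter)

/-! ### Birkhoff sums and invariant measures on the repeller -/

lemma IsHolderOn.continuousOn {f : ℝ → ℝ} {A : Set ℝ} (hf : IsHolderOn f A) :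
    ContinuousOn f A := by
  obtain ⟨β, C, hβ, -, -, h⟩ := hf
  exact continuousOn_of_rpow_modulus hβ h

lemma continuousOn_phi : ContinuousOn S.phi S.domain :=
  continuousOn_of_rpow_modulus S.eps_pos fun _ hx _ hy => S.phi_sub_le hx hy

/-- A continuous function on the repeller with uniformly bounded Birkhoff sums along arbitrarily
long orbit segments integrates to zero against some invariant probability measure. -/
lemma exists_invariantProb_integral_eq_zero {f : ℝ → ℝ} (hf : ContinuousOn f S.repeller) {M : ℝ}
    (h : ∀ N : ℕ, ∃ n, N ≤ n ∧ ∃ x ∈ S.repeller, |S.birkhoff f n x| ≤ M) :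
    ∃ ν : Measure ℝ, S.IsInvariantProb ν ∧ ∫ x, f x ∂ν = 0 := by
  have : CompactSpace S.repeller := isCompact_iff_compactSpace.1 S.isCompact_repeller
  let τ : S.repeller → S.repeller := S.mapsTo_repeller.restrict
  have hτ : Continuous τ :=
    (S.continuousOn_T.mono S.repeller_subset_domain).mapsToRestrict S.mapsTo_repeller
  have hiter : ∀ (m : ℕ) (y : S.repeller), ((τ^[m] y : S.repeller) : ℝ) = S.T^[m] y := by
    intro m
    induction m with
    | zero => intro y; rfl
    | succ m ih =>
      intro y
      rw [Function.iterate_succ_apply, ih, Function.iterate_succ_apply]; rfl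
  obtain ⟨ν, hinv, hint⟩ := exists_invariant_integral_eq_zero hτ
    (f := fun y : S.repeller => f y) (continuousOn_iff_continuous_domRestrict.1 hf) (M := M)
    (fun N => by
      obtain ⟨n, hn, x, hx, hb⟩ := h N
      refine ⟨n, hn, ⟨x, hx⟩, ?_⟩
      simpa only [birkhoffSum, hiter, birkhoff] using hb)
  have hmeas : MeasurableSet S.repeller := S.isCompact_repeller.measurableSet
  have hemb := MeasurableEmbedding.subtype_coe hmeas
  refine ⟨(ν : Measure S.repeller).map Subtype.val, ⟨?_, ?_, ?_⟩, ?_⟩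
  · exact Measure.isProbabilityMeasure_map measurable_subtype_coe.aemeasurable
  · rw [hemb.map_apply]; simp
  · intro A hA
    -- `T` need not be measurable off the repeller; pushforwards by a measurable embedding may be
    -- evaluated on arbitrary sets, and only the restriction of `T` to the repeller enters.
    rw [hemb.map_apply, hemb.map_apply]
    conv_rhs => rw [← hinv, Measure.map_apply hτ.measurable (measurable_subtype_coe hA)]
    rfl
  · rw [hemb.integral_map]; exact hint

/-- For the basic sets with `a|I|^α ≤ μ(I) ≤ b|I|^α`, the Gibbs property and bounded distortion
bound the Birkhoff sums of `ψ - αφ`. -/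
lemma exists_birkhoff_bound {ψ : ℝ → ℝ} {μ : Measure ℝ} (hμ : S.IsGibbs ψ μ) {α : ℝ} (hα : 0 ≤ α)
    {a b : ℝ} (ha : 0 < a) (hb : 0 < b) :
    ∃ M, ∀ n, 1 ≤ n → ∀ I, S.IsBasic n I → a * setLen I ^ α ≤ (μ I).toReal →
      (μ I).toReal ≤ b * setLen I ^ α →
      ∃ x ∈ S.repeller, |S.birkhoff (fun y => ψ y - α * S.phi y) n x| ≤ M := by
  obtain ⟨hprob, hnull, C, D, hC, hD, hG⟩ := hμ
  obtain ⟨K, hK⟩ := S.distort_le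
  have hne : S.repeller.Nonempty := by
    by_contra h
    rw [not_nonempty_iff_eq_empty] at h
    rw [h, compl_empty, measure_univ] at hnull
    exact one_ne_zero hnull
  refine ⟨|Real.log a| + |Real.log b| + |Real.log C| + |Real.log D| + α * K,
    fun n hn I hI h1 h2 => ?_⟩
  obtain ⟨w, rfl⟩ := hI.exists_eq_cyl hn
  obtain ⟨x, hxI, hx⟩ := S.cyl_inter_repeller_nonempty hne n w
  refine ⟨x, hx, ?_⟩
  obtain ⟨g1, g2⟩ := hG n hn _ hI x ⟨hxI, hx⟩
  obtain ⟨l1, l2⟩ := S.setLen_cyl hxI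
  set ℓ := setLen (S.cyl n w)
  set m := (μ (S.cyl n w)).toReal
  have hℓ : 0 < ℓ := (Real.exp_pos _).trans_le l2
  have hℓα : 0 < ℓ ^ α := Real.rpow_pos_of_pos hℓ α
  have hm : 0 < m := (by positivity : 0 < a * ℓ ^ α).trans_le h1
  have h1' := Real.log_le_log (by positivity) h1
  have h2' := Real.log_le_log hm h2
  have g1' := Real.log_le_log (by positivity) g1
  have g2' := Real.log_le_log hm g2
  have l1' := Real.log_le_log hℓ l1
  have l2' := Real.log_le_log (Real.exp_pos _) l2
  rw [Real.log_mul ha.ne' hℓα.ne', Real.log_rpow hℓ] at h1'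
  rw [Real.log_mul hb.ne' hℓα.ne', Real.log_rpow hℓ] at h2'
  rw [Real.log_mul hC.ne' (Real.exp_pos _).ne', Real.log_exp] at g1'
  rw [Real.log_mul hD.ne' (Real.exp_pos _).ne', Real.log_exp] at g2'
  rw [Real.log_exp] at l1' l2'
  have k1 := mul_le_mul_of_nonneg_left
    (by linarith [hK n] : Real.log ℓ ≤ S.birkhoff S.phi n x + K) hα
  have k2 := mul_le_mul_of_nonneg_left
    (by linarith [hK n] : S.birkhoff S.phi n x - K ≤ Real.log ℓ) hα
  have hsum : S.birkhoff (fun y => ψ y - α * S.phi y) n x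
      = S.birkhoff ψ n x - α * S.birkhoff S.phi n x := by
    simp [birkhoff, Finset.sum_sub_distrib, Finset.mul_sum]
  have := le_abs_self (Real.log a)
  have := le_abs_self (Real.log b)
  have := le_abs_self (Real.log C)
  have := le_abs_self (Real.log D)
  have := neg_abs_le (Real.log a)
  have := neg_abs_le (Real.log b)
  have := neg_abs_le (Real.log C)
  have := neg_abs_le (Real.log D)
  rw [hsum, abs_le]
  constructor <;> linarith

end CookieCutter

/-- If every `T`-invariant probability measure `ν` on `Λ` has `∫ (ψ - αφ) dν ≠ 0`,
then only finitely many pairs `(n, I)` of levels and basic sets satisfy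
`a|I|^α ≤ μ(I) ≤ b|I|^α`; hence the multifractal zeta function is entire. -/
theorem multifractal_zeta_entire (S : CookieCutter) (ψ : ℝ → ℝ)
    (hψ : CookieCutter.IsHolderOn ψ S.repeller)
    (μ : Measure ℝ) (hμ : S.IsGibbs ψ μ) (α : ℝ) (hα : 0 ≤ α)
    (a b : ℝ) (ha : 0 < a) (hb : 0 < b)
    (hint : ∀ ν : Measure ℝ, S.IsInvariantProb ν →
      (∫ x, (ψ x - α * S.phi x) ∂ν) ≠ 0) :
    Set.Finite {p : ℕ × Set ℝ | 1 ≤ p.1 ∧ S.IsBasic p.1 p.2 ∧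
      a * setLen p.2 ^ α ≤ (μ p.2).toReal ∧ (μ p.2).toReal ≤ b * setLen p.2 ^ α} := by
  obtain ⟨M, hM⟩ := S.exists_birkhoff_bound hμ hα ha hb
  by_contra hinf
  have hcont : ContinuousOn (fun x => ψ x - α * S.phi x) S.repeller :=
    hψ.continuousOn.sub
      (continuousOn_const.mul (S.continuousOn_phi.mono S.repeller_subset_domain))
  obtain ⟨ν, hν, hν0⟩ := S.exists_invariantProb_integral_eq_zero hcont (M := M) (fun N => by
    -- Each level has finitely many basic sets, so infinitely many pairs reach level `N`.
    by_contra! hN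
    refine hinf (((Set.finite_Ico 1 N).biUnion fun n hn =>
      (S.finite_basic hn.1).image (Prod.mk n)).subset ?_)
    rintro ⟨n, I⟩ ⟨hn, hI, h1, h2⟩
    obtain ⟨x, hx, hb⟩ := hM n hn I hI h1 h2
    have hnN : n < N := by
      by_contra! h
      exact (hN n h x hx).not_ge hb
    exact mem_biUnion (mem_Ico.2 ⟨hn, hnN⟩) (mem_image_of_mem _ hI))
  exact hint ν hν hν0
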